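/- arXiv:2010.06486 — 6 statements merged into one kernel-verified Lean document; each statement's English description precedes it below -/
import Mathlib

section
/- Let N ∈ ℕ with N ≥ 1 and let r, s > 0 be real numbers. Set C = √(s² + r²) and p = 1/2 + s/(2C) ∈ (1/2, 1). Let L be the (N+1)×(N+1) real symmetric tridiagonal matrix with entries L_{n,n} = s(2n − N) for 0 ≤ n ≤ N and L_{n+1,n} = L_{n,n+1} = r√((n+1)(N−n)) for 0 ≤ n ≤ N−1, all other entries zero. Let W(x) = binom(N,x) p^x (1−p)^{N−x} and let Q be the (N+1)×(N+1) matrix with entries Q_{n,x} = K_n(x; p, N) √(W(x)). Then Q is an orthogonal matrix (QᵀQ = QQᵀ = I), and L·Q = Q·D where D is the diagonal matrix with entries D_{x,x} = C(N − 2x), x = 0, …, N. In particular L has the simple spectrum {C(N − 2x) : x = 0, …, N}, and for each x the vector (K_n(x; p, N))_{n=0}^{N} is an eigenvector of L with eigenvalue C(N − 2x). -/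
open Matrix

/-- Pochhammer symbol (q)_l = q(q+1)⋯(q+l−1). -/
noncomputable def poch (q : ℝ) (l : ℕ) : ℝ := ∏ i ∈ Finset.range l, (q + i)

/-- Orthonormal Krawtchouk polynomials
K_n(x; p, N) = (p/(1−p))^{n/2} √(binom(N,n)) Σ_l (−n)_l (−x)_l / ((−N)_l l!) p^{−l}. -/
noncomputable def krawtchouk (n x : ℕ) (p : ℝ) (N : ℕ) : ℝ :=
  (p / (1 - p)) ^ ((n : ℝ) / 2) * Real.sqrt (N.choose n) *
    ∑ l ∈ Finset.range (n + 1),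
      poch (-(n : ℝ)) l * poch (-(x : ℝ)) l / (poch (-(N : ℝ)) l * (l.factorial : ℝ))
        * (1 / p) ^ l

theorem poch_succ_r (q : ℝ) (l : ℕ) : poch q (l + 1) = poch q l * (q + l) := by
  simp [poch, Finset.prod_range_succ]

theorem poch_succ_l (q : ℝ) (l : ℕ) : poch q (l + 1) = q * poch (q + 1) l := by
  simp only [poch, Finset.prod_range_succ']
  rw [mul_comm]
  congr 1
  · simp
  · apply Finset.prod_congr rfl
    intro i _
    push_cast
    ring

theorem poch_neg_zero (n l : ℕ) (h : n < l) : poch (-(n : ℝ)) l = 0 := by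
  unfold poch
  apply Finset.prod_eq_zero (Finset.mem_range.mpr h)
  simp

theorem poch_neg_ne (n l : ℕ) (h : l ≤ n) : poch (-(n : ℝ)) l ≠ 0 := by
  unfold poch
  rw [Finset.prod_ne_zero_iff]
  intro i hi
  have h1 : i < n := lt_of_lt_of_le (Finset.mem_range.mp hi) h
  have h2 : (i : ℝ) < n := by exact_mod_cast h1
  intro h3
  linarith

/-- the coefficient -/
noncomputable def kco (x N : ℕ) (p : ℝ) (l : ℕ) : ℝ :=
  poch (-(x : ℝ)) l / (poch (-(N : ℝ)) l * (l.factorial : ℝ)) * (1 / p) ^ l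

/-- the hypergeometric sum -/
noncomputable def ksum (n : ℝ) (x N : ℕ) (p : ℝ) : ℝ :=
  ∑ l ∈ Finset.range (N + 1), poch (-n) l * kco x N p l

theorem kco_succ (x N : ℕ) (p : ℝ) (hp : p ≠ 0) (l : ℕ) (hl : l < N) :
    kco x N p (l + 1) * ((l + 1) * p * (-N + l)) = kco x N p l * (-x + l) := by
  unfold kco
  have h1 := poch_neg_ne N l hl.le
  have h2 := poch_neg_ne N (l + 1) hl
  rw [poch_succ_r] at h2
  have h3 : (-(N : ℝ) + l) ≠ 0 := right_ne_zero_of_mul h2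
  have h4 : (l.factorial : ℝ) ≠ 0 := by exact_mod_cast l.factorial_ne_zero
  have h5 : ((l : ℝ) + 1) ≠ 0 := by positivity
  rw [poch_succ_r, poch_succ_r, Nat.factorial_succ, pow_succ]
  push_cast
  field_simp

theorem ksum_aux (n : ℝ) (x N : ℕ) (p : ℝ) (hp : p ≠ 0) (M : ℕ) (hM : M ≤ N) :
    ∑ l ∈ Finset.range (M + 1), (p * (N - n) * (poch (-(n + 1)) l - poch (-n) l)
      - n * (1 - p) * (poch (-n) l - poch (-(n - 1)) l) + x * poch (-n) l) * kco x N p l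
      = - (kco x N p M * (-x + M) * poch (-n) M) := by
  induction M with
  | zero => simp [poch]; ring
  | succ M ih =>
    rw [Finset.sum_range_succ, ih (by omega)]
    have h := kco_succ x N p hp M (by omega)
    have e1 : poch (-(n + 1)) (M + 1) = (-n - 1) * poch (-n) M := by
      rw [poch_succ_l]; congr 1 <;> ring_nf
    have e2 : poch (-n) (M + 1) = poch (-n) M * (-n + M) := poch_succ_r _ _
    have e3 : n * poch (-(n - 1)) (M + 1) = - (poch (-n) M * (-n + M) * (-n + M + 1)) := by
      have := poch_succ_l (-n) (M + 1)
      rw [poch_succ_r, poch_succ_r] at this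
      have e : -(n - 1) = -n + 1 := by ring
      rw [e]
      push_cast at this
      linarith
    rw [← h, e1, e2]
    push_cast
    linear_combination ((1 - p) * kco x N p (M + 1)) * e3

theorem ksum_rec (n : ℝ) (x N : ℕ) (hx : x ≤ N) (p : ℝ) (hp : p ≠ 0) :
    p * (N - n) * (ksum (n + 1) x N p - ksum n x N p)
      - n * (1 - p) * (ksum n x N p - ksum (n - 1) x N p) + x * ksum n x N p = 0 := by
  have h := ksum_aux n x N p hp N le_rfl
  have h0 : kco x N p N * (-x + N) = 0 := by
    rcases hx.eq_or_lt with h | h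
    · subst h; simp
    · simp [kco, poch_neg_zero x N h]
  rw [h0] at h
  simp only [zero_mul, neg_zero] at h
  rw [← h]
  simp only [ksum, Finset.mul_sum, ← Finset.sum_sub_distrib, ← Finset.sum_add_distrib]
  apply Finset.sum_congr rfl
  intro l _
  ring

theorem ksum_symm (n x N : ℕ) (p : ℝ) : ksum n x N p = ksum x n N p := by
  unfold ksum kco
  apply Finset.sum_congr rfl
  intro l _
  ring

theorem ksum_zero (x N : ℕ) (p : ℝ) : ksum 0 x N p = 1 := by
  unfold ksum
  rw [Finset.sum_range_succ', Finset.sum_eq_zero]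
  · simp [kco, poch]
  · intro l _
    rw [poch_succ_l]; simp

theorem kraw_eq (n x N : ℕ) (hn : n ≤ N) (p t : ℝ) (ht : 0 ≤ t) (htp : p / (1 - p) = t ^ 2) :
    krawtchouk n x p N = t ^ n * Real.sqrt (N.choose n) * ksum n x N p := by
  unfold krawtchouk ksum
  congr 1
  · congr 1
    rw [htp, ← Real.rpow_natCast, ← Real.rpow_natCast, ← Real.rpow_mul ht]
    congr 1
    push_cast; ring
  · have : Finset.range (n + 1) ⊆ Finset.range (N + 1) := by
      intro i; simp only [Finset.mem_range]; omega
    rw [← Finset.sum_subset this]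
    · apply Finset.sum_congr rfl
      intro l _
      unfold kco
      ring
    · intro l _ h2
      rw [poch_neg_zero n l (by simpa using h2), zero_mul]

theorem tri_sum (N : ℕ) (r s : ℝ) (f : ℕ → ℝ) (n : Fin (N + 1)) :
    ∑ m : Fin (N + 1), (if (n : ℕ) = (m : ℕ) then s * (2 * ((n : ℕ) : ℝ) - (N : ℝ))
      else if (n : ℕ) + 1 = (m : ℕ) then
        r * Real.sqrt ((((n : ℕ) : ℝ) + 1) * ((N : ℝ) - ((n : ℕ) : ℝ)))
      else if (m : ℕ) + 1 = (n : ℕ) then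
        r * Real.sqrt ((((m : ℕ) : ℝ) + 1) * ((N : ℝ) - ((m : ℕ) : ℝ)))
      else 0) * f m = s * (2 * (n : ℕ) - N) * f n
        + r * Real.sqrt ((((n : ℕ) : ℝ) + 1) * ((N : ℝ) - ((n : ℕ) : ℝ))) * f (n + 1)
        + r * Real.sqrt (((n : ℕ) : ℝ) * ((N : ℝ) + 1 - ((n : ℕ) : ℝ))) * f (n - 1) := by
  obtain ⟨n, hn⟩ := n
  simp only
  rw [Fin.sum_univ_eq_sum_range (fun m => (if n = m then s * (2 * (n : ℝ) - (N : ℝ))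
      else if n + 1 = m then
        r * Real.sqrt (((n : ℝ) + 1) * ((N : ℝ) - (n : ℝ)))
      else if m + 1 = n then
        r * Real.sqrt (((m : ℝ) + 1) * ((N : ℝ) - (m : ℝ)))
      else 0) * f m)]
  have h : ∀ m ∈ Finset.range (N + 1), (if n = m then s * (2 * (n : ℝ) - (N : ℝ))
      else if n + 1 = m then
        r * Real.sqrt (((n : ℝ) + 1) * ((N : ℝ) - (n : ℝ)))
      else if m + 1 = n then
        r * Real.sqrt (((m : ℝ) + 1) * ((N : ℝ) - (m : ℝ)))
      else 0) * f m = (if n = m then s * (2 * (n : ℝ) - N) * f n else 0)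
       + (if n + 1 = m then r * Real.sqrt (((n : ℝ) + 1) * ((N : ℝ) - (n : ℝ))) * f (n + 1) else 0)
       + (if n - 1 = m then
          r * Real.sqrt ((n : ℝ) * ((N : ℝ) + 1 - (n : ℝ))) * f (n - 1) else 0) := by
    intro m _
    by_cases h1 : n = m
    · subst h1
      by_cases h0 : n = 0
      · subst h0; simp
      · rw [if_pos rfl, if_pos rfl, if_neg (by omega), if_neg (by omega)]; ring
    · by_cases h2 : n + 1 = m
      · subst h2
        rw [if_neg h1, if_pos rfl, if_neg h1, if_pos rfl, if_neg (by omega)]; ring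
      · by_cases h3 : m + 1 = n
        · subst h3
          rw [if_neg h1, if_neg h2, if_pos rfl, if_neg h1, if_neg h2, if_pos (by omega)]
          push_cast
          simp only [Nat.add_sub_cancel, zero_add]
          congr 4
          ring
        · rw [if_neg h1, if_neg h2, if_neg h3, if_neg h1, if_neg h2, if_neg (by omega)]; ring
  rw [Finset.sum_congr rfl h, Finset.sum_add_distrib, Finset.sum_add_distrib,
    Finset.sum_ite_eq, Finset.sum_ite_eq, Finset.sum_ite_eq, if_pos (by simpa using hn),
    if_pos (show n - 1 ∈ Finset.range (N + 1) by simp only [Finset.mem_range]; omega)]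
  congr 2
  split_ifs with h5
  · rfl
  · have : n = N := by simp only [Finset.mem_range] at h5; omega
    subst this
    simp

theorem choose_up (N n : ℕ) (hn : n ≤ N) :
    Real.sqrt (((n : ℝ) + 1) * (N - n)) * Real.sqrt (N.choose (n + 1))
      = (N - n) * Real.sqrt (N.choose n) := by
  have h0 : (0 : ℝ) ≤ N - n := by
    have : (n : ℝ) ≤ N := by exact_mod_cast hn
    linarith
  have h := Nat.choose_succ_right_eq N n
  have h' : (N.choose (n + 1) : ℝ) * (n + 1) = N.choose n * (N - n) := by
    have := congrArg (Nat.cast : ℕ → ℝ) h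
    push_cast [Nat.cast_sub hn] at this
    exact this
  rw [← Real.sqrt_mul (by positivity)]
  have : ((n : ℝ) + 1) * (N - n) * (N.choose (n + 1)) = (N - n) ^ 2 * N.choose n := by
    linear_combination (N - n : ℝ) * h'
  rw [this, Real.sqrt_mul (by positivity), Real.sqrt_sq h0]

theorem choose_down (N n : ℕ) (hn : n ≤ N) :
    Real.sqrt ((n : ℝ) * (N + 1 - n)) * Real.sqrt (N.choose (n - 1))
      = n * Real.sqrt (N.choose n) := by
  rcases n with _ | n
  · simp
  have h0 : (0 : ℝ) ≤ N - n := by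
    have : ((n + 1 : ℕ) : ℝ) ≤ N := by exact_mod_cast hn
    push_cast at this
    linarith
  have h := Nat.choose_succ_right_eq N n
  have h' : (N.choose (n + 1) : ℝ) * (n + 1) = N.choose n * (N - n) := by
    have := congrArg (Nat.cast : ℕ → ℝ) h
    push_cast [Nat.cast_sub (show n ≤ N by omega)] at this
    exact this
  have h1 : ((n + 1 : ℕ) : ℝ) * (N + 1 - (n + 1 : ℕ)) * (N.choose (n + 1 - 1))
      = ((n : ℝ) + 1) ^ 2 * N.choose (n + 1) := by
    push_cast [Nat.add_sub_cancel]
    linear_combination -(n + 1 : ℝ) * h'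
  rw [← Real.sqrt_mul, h1, Real.sqrt_mul (by positivity), Real.sqrt_sq (by positivity)]
  · push_cast; ring
  · push_cast
    have : (N : ℝ) + 1 - (n + 1) = N - n := by ring
    rw [this]; positivity

theorem eig_scalar (N : ℕ) (r s C p t : ℝ) (ht : 0 < t) (htp : p / (1 - p) = t ^ 2)
    (hp0 : p ≠ 0) (h1 : r * t = 2 * C * p) (h2 : r = 2 * C * (1 - p) * t) (h3 : 2 * C * p = C + s)
    (n x : ℕ) (hn : n ≤ N) (hx : x ≤ N) :
    s * (2 * (n : ℕ) - N) * krawtchouk n x p N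
        + r * Real.sqrt (((n : ℝ) + 1) * ((N : ℝ) - (n : ℝ))) * krawtchouk (n + 1) x p N
        + r * Real.sqrt ((n : ℝ) * ((N : ℝ) + 1 - (n : ℝ))) * krawtchouk (n - 1) x p N
      = C * (N - 2 * x) * krawtchouk n x p N := by
  have hrec := ksum_rec n x N hx p hp0
  have hup : r * Real.sqrt (((n : ℝ) + 1) * ((N : ℝ) - (n : ℝ))) * krawtchouk (n + 1) x p N
      = t ^ n * Real.sqrt (N.choose n) * (2 * C * p * (N - n) * ksum (n + 1) x N p) := by
    rcases hn.eq_or_lt with h | h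
    · subst h; simp
    · rw [kraw_eq (n + 1) x N h p t ht.le htp]
      have := choose_up N n hn
      push_cast
      rw [← h1]
      linear_combination (r * t ^ (n + 1) * ksum (n + 1) x N p) * this
  have hdn : r * Real.sqrt ((n : ℝ) * ((N : ℝ) + 1 - (n : ℝ))) * krawtchouk (n - 1) x p N
      = t ^ n * Real.sqrt (N.choose n) * (2 * C * (1 - p) * n * ksum (n - 1) x N p) := by
    rcases n with _ | n
    · simp
    · rw [kraw_eq (n + 1 - 1) x N (by omega) p t ht.le htp]
      have := choose_down N (n + 1) hn
      have e : (((n + 1 : ℕ) : ℝ) - 1) = ((n + 1 - 1 : ℕ) : ℝ) := by simp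
      rw [e]
      simp only [Nat.add_sub_cancel] at this ⊢
      rw [pow_succ]
      calc _ = r * t ^ n * ksum n x N p * (Real.sqrt (((n + 1 : ℕ) : ℝ) * (N + 1 - (n + 1 : ℕ)))
              * Real.sqrt (N.choose n)) := by ring
        _ = _ := by
          rw [this]
          linear_combination (t ^ n * ksum n x N p * ((n + 1 : ℕ) : ℝ) *
            Real.sqrt (N.choose (n + 1))) * h2
  rw [hup, hdn, kraw_eq n x N hn p t ht.le htp]
  linear_combination (t ^ n * Real.sqrt (N.choose n)) * (2 * C * hrec + ((N : ℝ) - 2 * n) * ksum n x N p * h3)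

theorem Q_entry (N : ℕ) (p t : ℝ) (ht : 0 < t) (htp : p = (1 - p) * t ^ 2) (hp0 : 0 < p)
    (hp1 : p < 1) (n x : ℕ) (hn : n ≤ N) (hx : x ≤ N) :
    krawtchouk n x p N * Real.sqrt ((N.choose x : ℝ) * p ^ x * (1 - p) ^ (N - x))
      = Real.sqrt ((1 - p) ^ N) * (t ^ n * Real.sqrt (N.choose n))
         * (t ^ x * Real.sqrt (N.choose x)) * ksum n x N p := by
  have hq : 0 < 1 - p := by linarith
  have h1 : p / (1 - p) = t ^ 2 := by rw [div_eq_iff hq.ne']; linarith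
  rw [kraw_eq n x N hn p t ht.le h1]
  have h2 : (N.choose x : ℝ) * p ^ x * (1 - p) ^ (N - x)
      = (t ^ x) ^ 2 * ((N.choose x : ℝ) * (1 - p) ^ N) := by
    have e1 : p ^ x = (1 - p) ^ x * (t ^ x) ^ 2 := by
      rw [← pow_mul, mul_comm x 2, pow_mul, ← mul_pow, ← htp]
    have e2 : (1 - p) ^ N = (1 - p) ^ (N - x) * (1 - p) ^ x := by
      rw [← pow_add]; congr 1; omega
    rw [e1, e2]; ring
  rw [h2, Real.sqrt_mul (by positivity), Real.sqrt_sq (by positivity),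
    Real.sqrt_mul (by positivity)]
  ring

/-- diagonalization of the su(2) Lax operator by Krawtchouk polynomials. -/
theorem stmt_3 (N : ℕ) (hN : 1 ≤ N) (r s : ℝ) (hr : 0 < r) (hs : 0 < s)
    (C p : ℝ) (hC : C = Real.sqrt (s ^ 2 + r ^ 2)) (hp : p = 1 / 2 + s / (2 * C))
    (L Q D : Matrix (Fin (N + 1)) (Fin (N + 1)) ℝ)
    (hL : L = Matrix.of fun (n m : Fin (N + 1)) =>
      if (n : ℕ) = (m : ℕ) then s * (2 * ((n : ℕ) : ℝ) - (N : ℝ))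
      else if (n : ℕ) + 1 = (m : ℕ) then
        r * Real.sqrt ((((n : ℕ) : ℝ) + 1) * ((N : ℝ) - ((n : ℕ) : ℝ)))
      else if (m : ℕ) + 1 = (n : ℕ) then
        r * Real.sqrt ((((m : ℕ) : ℝ) + 1) * ((N : ℝ) - ((m : ℕ) : ℝ)))
      else 0)
    (hQ : Q = Matrix.of fun (n x : Fin (N + 1)) =>
      krawtchouk (n : ℕ) (x : ℕ) p N *
        Real.sqrt ((N.choose (x : ℕ) : ℝ) * p ^ (x : ℕ) * (1 - p) ^ (N - (x : ℕ))))
    (hD : D = Matrix.diagonal fun x : Fin (N + 1) => C * ((N : ℝ) - 2 * ((x : ℕ) : ℝ))) :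
    (1 / 2 < p ∧ p < 1) ∧
    Qᵀ * Q = 1 ∧ Q * Qᵀ = 1 ∧ L * Q = Q * D ∧
    (∀ x : Fin (N + 1),
      L.mulVec (fun n : Fin (N + 1) => krawtchouk (n : ℕ) (x : ℕ) p N)
        = (C * ((N : ℝ) - 2 * ((x : ℕ) : ℝ)))
            • (fun n : Fin (N + 1) => krawtchouk (n : ℕ) (x : ℕ) p N)) ∧
    spectrum ℝ L = Set.range (fun x : Fin (N + 1) => C * ((N : ℝ) - 2 * ((x : ℕ) : ℝ))) ∧
    Function.Injective (fun x : Fin (N + 1) => C * ((N : ℝ) - 2 * ((x : ℕ) : ℝ))) := by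
  have hCpos : 0 < C := by rw [hC]; positivity
  have hC2 : C ^ 2 = s ^ 2 + r ^ 2 := by rw [hC, Real.sq_sqrt (by positivity)]
  have h3 : 2 * C * p = C + s := by rw [hp]; field_simp
  have hsC : s < C := by nlinarith
  have hp1 : p < 1 := by nlinarith
  have hp2 : 1 / 2 < p := by nlinarith
  have hp0 : 0 < p := by linarith
  obtain ⟨t, ht⟩ : ∃ t, t = (C + s) / r := ⟨_, rfl⟩
  have htpos : 0 < t := by rw [ht]; positivity
  have h1 : r * t = 2 * C * p := by rw [h3, ht]; field_simp
  have h2 : r = 2 * C * (1 - p) * t := by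
    have e : 2 * C * (1 - p) = C - s := by linarith
    rw [e, ht]; field_simp; linarith
  have htp : p = (1 - p) * t ^ 2 := by
    have : (2 * C) * p = (2 * C) * ((1 - p) * t ^ 2) := by
      rw [← h1]; linear_combination t * h2
    exact mul_left_cancel₀ (by positivity) this
  have htp' : p / (1 - p) = t ^ 2 := by
    rw [div_eq_iff (by linarith)]; linarith
  have hinj : Function.Injective (fun x : Fin (N + 1) => C * ((N : ℝ) - 2 * ((x : ℕ) : ℝ))) := by
    intro x y h
    have h' := mul_left_cancel₀ hCpos.ne' h
    have : ((x : ℕ) : ℝ) = ((y : ℕ) : ℝ) := by linarith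
    exact Fin.ext (by exact_mod_cast this)
  have heig : ∀ x : Fin (N + 1),
      L.mulVec (fun n : Fin (N + 1) => krawtchouk (n : ℕ) (x : ℕ) p N)
        = (C * ((N : ℝ) - 2 * ((x : ℕ) : ℝ)))
            • (fun n : Fin (N + 1) => krawtchouk (n : ℕ) (x : ℕ) p N) := by
    intro x
    funext n
    rw [hL]
    simp only [Matrix.mulVec, dotProduct, Matrix.of_apply, Pi.smul_apply, smul_eq_mul]
    rw [tri_sum N r s (fun m => krawtchouk m x p N) n]
    exact eig_scalar N r s C p t htpos htp' hp0.ne' h1 h2 h3 n x (by omega) (by omega)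
  have hLQ : L * Q = Q * D := by
    ext n x
    have h := congrFun (heig x) n
    simp only [Matrix.mulVec, dotProduct, Pi.smul_apply, smul_eq_mul] at h
    rw [hD, Matrix.mul_diagonal, Matrix.mul_apply, hQ]
    simp only [Matrix.of_apply, ← mul_assoc]
    rw [← Finset.sum_mul, h]
    ring
  have hLs : Lᵀ = L := by
    ext n m
    rw [hL]
    simp only [Matrix.transpose_apply, Matrix.of_apply]
    by_cases e1 : (n : ℕ) = m
    · rw [if_pos e1.symm, if_pos e1, e1]
    · rw [if_neg (Ne.symm e1), if_neg e1]
      by_cases e2 : (n : ℕ) + 1 = m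
      · rw [if_neg (by omega), if_pos e2, if_pos e2]
      · rw [if_neg e2, if_neg e2]
  have hQe : ∀ n x : Fin (N + 1), Q n x = Real.sqrt ((1 - p) ^ N)
      * (t ^ (n : ℕ) * Real.sqrt (N.choose n))
         * (t ^ (x : ℕ) * Real.sqrt (N.choose x)) * ksum (n : ℕ) x N p := by
    intro n x
    rw [hQ, Matrix.of_apply]
    exact Q_entry N p t htpos htp hp0 hp1 n x (by omega) (by omega)
  have hQs : Qᵀ = Q := by
    ext n x
    rw [Matrix.transpose_apply, hQe, hQe, ksum_symm]
    ring
  have hDs : Dᵀ = D := by rw [hD, Matrix.diagonal_transpose]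
  have hcomm : (Q * Q) * D = D * (Q * Q) := by
    have a1 : Q * L = D * Q := by
      have := congrArg Matrix.transpose hLQ
      rwa [Matrix.transpose_mul, Matrix.transpose_mul, hLs, hQs, hDs] at this
    rw [Matrix.mul_assoc, ← hLQ, ← Matrix.mul_assoc, a1, Matrix.mul_assoc]
  have hoff : ∀ x y : Fin (N + 1), x ≠ y → (Q * Q) x y = 0 := by
    intro x y hxy
    have := congrFun (congrFun hcomm x) y
    rw [hD, Matrix.mul_diagonal, Matrix.diagonal_mul] at this
    by_contra h
    apply hxy
    apply hinj
    apply mul_right_cancel₀ h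
    simp only
    linarith
  have hdiag : Q * Q = Matrix.diagonal (fun x => (Q * Q) x x) := by
    ext x y
    by_cases h : x = y
    · subst h; simp
    · rw [hoff x y h, Matrix.diagonal_apply_ne _ h]
  have hQ0 : ∀ x : Fin (N + 1), Q 0 x ^ 2 = p ^ (x : ℕ) * (1 - p) ^ (N - (x : ℕ)) * N.choose x := by
    intro x
    have hq : 0 < 1 - p := by linarith
    have hk : krawtchouk 0 x p N = 1 := by simp [krawtchouk, poch]
    rw [hQ, Matrix.of_apply, Fin.val_zero, hk, one_mul, Real.sq_sqrt (by positivity)]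
    ring
  have h00 : (Q * Q) 0 0 = 1 := by
    rw [Matrix.mul_apply]
    have : ∀ x ∈ Finset.univ, Q 0 x * Q x 0
        = p ^ (x : ℕ) * (1 - p) ^ (N - (x : ℕ)) * N.choose x := by
      intro x _
      rw [← hQ0, sq]
      congr 1
      exact congrFun (congrFun hQs 0) x
    rw [Finset.sum_congr rfl this,
      Fin.sum_univ_eq_sum_range (fun x => p ^ x * (1 - p) ^ (N - x) * (N.choose x : ℝ)),
      ← add_pow]
    simp
  have hdd : ∀ x, (Q * Q) x x = 1 := by
    intro x
    have e : Q * (Q * Q) = (Q * Q) * Q := (Matrix.mul_assoc _ _ _).symm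
    rw [hdiag] at e
    have e' := congrFun (congrFun e 0) x
    rw [Matrix.mul_diagonal, Matrix.diagonal_mul, h00, one_mul] at e'
    have hne : Q 0 x ≠ 0 := by
      intro h
      have := hQ0 x
      rw [h] at this
      have hq : 0 < 1 - p := by linarith
      have hc : 0 < (N.choose (x : ℕ) : ℝ) := by
        exact_mod_cast Nat.choose_pos (by omega)
      have : 0 < p ^ (x : ℕ) * (1 - p) ^ (N - (x : ℕ)) * (N.choose x : ℝ) := by positivity
      linarith
    exact mul_left_cancel₀ hne (by rw [e', mul_one])
  have hQQ : Q * Q = 1 := by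
    rw [hdiag]
    simp only [hdd]
    exact Matrix.diagonal_one
  refine ⟨⟨hp2, hp1⟩, by rw [hQs, hQQ], by rw [hQs, hQQ], hLQ, heig, ?_, hinj⟩
  have hLe : L = Q * D * Q := by rw [← hLQ, Matrix.mul_assoc, hQQ, Matrix.mul_one]
  have := spectrum.units_conjugate (R := ℝ) (a := D) (u := ⟨Q, Q, hQQ, hQQ⟩)
  simp only [Units.inv_mk] at this
  rw [hLe, this, hD, spectrum_diagonal]
end

section
/- Let r, s : [0,∞) → ℝ be continuously differentiable and u : [0,∞) → ℝ continuous, satisfying ṡ(t) = −2u(t)r(t) and ṙ(t) = −2u(t)s(t) for all t. Assume sgn(u(t)) = −sgn(r(t)) for all t > 0, s(0) > 0 and r(0) > 0. Then s(t) > 0 and r(t) > 0 for all t > 0. -/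
/-- positivity of r and s for the su(1,1) Lax system ṡ = −2ur, ṙ = −2us. -/
theorem stmt_4 (r s u : ℝ → ℝ)
    (hs : ∀ t ∈ Set.Ici (0 : ℝ), HasDerivAt s (-2 * u t * r t) t)
    (hr : ∀ t ∈ Set.Ici (0 : ℝ), HasDerivAt r (-2 * u t * s t) t)
    (hu : ContinuousOn u (Set.Ici (0 : ℝ)))
    (hsgn : ∀ t > (0 : ℝ), Real.sign (u t) = - Real.sign (r t))
    (hs0 : s 0 > 0) (hr0 : r 0 > 0) :
    ∀ t > (0 : ℝ), s t > 0 ∧ r t > 0 := by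
  have hneg : ∀ t > (0 : ℝ), 0 < r t → u t < 0 := by
    intro t ht h
    have h1 := hsgn t ht
    rw [Real.sign_of_pos h] at h1
    rcases lt_trichotomy (u t) 0 with h2 | h2 | h2
    · exact h2
    · rw [h2, Real.sign_zero] at h1; norm_num at h1
    · rw [Real.sign_of_pos h2] at h1; norm_num at h1
  have hpos : ∀ t > (0 : ℝ), r t < 0 → 0 < u t := by
    intro t ht h
    have h1 := hsgn t ht
    rw [Real.sign_of_neg h] at h1
    rcases lt_trichotomy (u t) 0 with h2 | h2 | h2
    · rw [Real.sign_of_neg h2] at h1; norm_num at h1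
    · rw [h2, Real.sign_zero] at h1; norm_num at h1
    · exact h2
  have hsm : MonotoneOn s (Set.Ici 0) := by
    apply monotoneOn_of_deriv_nonneg (convex_Ici 0)
    · exact fun t ht => (hs t ht).continuousAt.continuousWithinAt
    · intro t ht
      exact (hs t (interior_subset ht)).differentiableAt.differentiableWithinAt
    · intro t ht
      rw [(hs t (interior_subset ht)).deriv]
      rw [interior_Ici] at ht
      rcases lt_trichotomy (r t) 0 with h | h | h
      · nlinarith [hpos t ht h]
      · simp [h]
      · nlinarith [hneg t ht h]
  have hsp : ∀ t, 0 ≤ t → 0 < s t := fun t ht =>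
    lt_of_lt_of_le hs0 (hsm Set.self_mem_Ici ht ht)
  intro t ht
  refine ⟨hsp t ht.le, ?_⟩
  by_contra hcon
  have hcont : ContinuousOn r (Set.Icc 0 t) :=
    fun x hx => (hr x hx.1).continuousAt.continuousWithinAt
  have hcl : IsClosed (Set.Icc 0 t ∩ r ⁻¹' Set.Iic 0) :=
    hcont.preimage_isClosed_of_isClosed isClosed_Icc isClosed_Iic
  have hcpt : IsCompact (Set.Icc 0 t ∩ r ⁻¹' Set.Iic 0) :=
    isCompact_Icc.of_isClosed_subset hcl Set.inter_subset_left
  obtain ⟨T, ⟨hT, hrT⟩, hmin⟩ := hcpt.exists_isLeast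
    ⟨t, ⟨ht.le, le_rfl⟩, not_lt.mp hcon⟩
  have hrm : MonotoneOn r (Set.Icc 0 T) := by
    apply monotoneOn_of_deriv_nonneg (convex_Icc 0 T)
    · exact fun x hx => (hr x hx.1).continuousAt.continuousWithinAt
    · intro x hx
      exact (hr x (interior_subset hx).1).differentiableAt.differentiableWithinAt
    · intro x hx
      rw [interior_Icc] at hx
      rw [(hr x hx.1.le).deriv]
      have hx3 : 0 < r x := by
        by_contra h
        exact absurd (hmin ⟨⟨hx.1.le, hx.2.le.trans hT.2⟩, not_lt.mp h⟩) (not_le.mpr hx.2)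
      nlinarith [hneg x hx.1 hx3, hsp x hx.1.le]
  have h1 := hrm ⟨le_rfl, hT.1⟩ ⟨hT.1, le_rfl⟩ hT.1
  have h2 : r T ≤ 0 := hrT
  linarith
end

section
/- Let c, r be nonzero real numbers, h > 0, k ≥ 0 and s ∈ ℝ. Set a = hr²/(4c²) and σ = sgn(r/c) ∈ {1, −1}. Then for every x ∈ ℕ, the sequence f_n = (−σ)^n C_n(x; a), n ∈ ℕ, satisfies r√(hn) f_{n−1} + (2c(n+k) − hs) f_n + r√(h(n+1)) f_{n+1} = (2c(x+k) − h(r²/(2c) + s)) · f_n for all n ∈ ℕ (with f_{−1} = 0), where C_n(x; a) are the orthonormal Charlier polynomials. That is, f is a formal eigenvector of the Jacobi operator π_{k,h}(L) : e_n ↦ r√(h(n+1)) e_{n+1} + (2c(n+k) − hs) e_n + r√(hn) e_{n−1} with eigenvalue 2c(x+k) − h·(r²/(2c) + s); here r²/(2c) + s is the invariant of the flow ṡ = 2ru, ṙ = −2cu. -/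
/-- Orthonormal Charlier polynomials
C_n(x; a) = √(a^n / n!) Σ_l (−n)_l (−x)_l / l! (−1/a)^l. -/
noncomputable def charlier (n x : ℕ) (a : ℝ) : ℝ :=
  Real.sqrt (a ^ n / n.factorial) *
    ∑ l ∈ Finset.range (min n x + 1),
      poch (-(n : ℝ)) l * poch (-(x : ℝ)) l / (l.factorial : ℝ) * (-1 / a) ^ l


theorem poch_succ_aux (q : ℝ) (l : ℕ) : poch q (l+1) = poch q l * (q + l) := by
  simp [poch, Finset.prod_range_succ]

theorem poch_up_aux (q : ℝ) (l : ℕ) : q * poch (q+1) l = (q + l) * poch q l := by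
  induction l with
  | zero => simp [poch]
  | succ l ih =>
    rw [poch_succ_aux, poch_succ_aux, ← mul_assoc, ih]; push_cast; ring

theorem poch_down_aux (q : ℝ) (l : ℕ) : poch (q-1) (l+1) = (q-1) * poch q l := by
  have h1 := poch_up_aux (q-1) l
  rw [sub_add_cancel] at h1
  rw [poch_succ_aux, h1]; ring

theorem poch_zero_aux (n l : ℕ) (h : n < l) : poch (-(n:ℝ)) l = 0 := by
  apply Finset.prod_eq_zero (Finset.mem_range.2 h); simp

noncomputable def chT (q : ℝ) (x : ℕ) (a : ℝ) (M : ℕ) : ℝ :=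
  ∑ l ∈ Finset.range M, poch q l * poch (-(x : ℝ)) l / (l.factorial : ℝ) * (-1 / a) ^ l

theorem chT_rec (q : ℝ) (x : ℕ) (a : ℝ) (ha : a ≠ 0) (M : ℕ) :
    a * chT (q-1) x a (M+1) + (q - a + x) * chT q x a (M+1) - q * chT (q+1) x a (M+1)
    = (x - M) * (poch q M * poch (-(x : ℝ)) M / (M.factorial : ℝ) * (-1 / a) ^ M) := by
  induction M with
  | zero => simp [chT, poch]; ring
  | succ M ih =>
    have e : ∀ p, chT p x a (M+1+1) = chT p x a (M+1) +
      poch p (M+1) * poch (-(x : ℝ)) (M+1) / ((M+1).factorial : ℝ) * (-1 / a) ^ (M+1) :=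
      fun p => Finset.sum_range_succ _ _
    have h1 := poch_up_aux q (M+1)
    have h2 := poch_down_aux q M
    have h3 := poch_succ_aux q M
    have h4 := poch_succ_aux (-(x:ℝ)) M
    have hf : (M.factorial : ℝ) ≠ 0 := by positivity
    have hM : (M:ℝ) + 1 ≠ 0 := by positivity
    have h5 : poch (-(x:ℝ)) (M+1) / ((M+1).factorial : ℝ) * (-1 / a) ^ (M+1) * (a * (M+1))
        = (x - M) * (poch (-(x:ℝ)) M / (M.factorial : ℝ) * (-1 / a) ^ M) := by
      rw [h4, Nat.factorial_succ, pow_succ]; push_cast; field_simp; ring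
    rw [e, e, e]
    set d := poch (-(x:ℝ)) (M+1) / ((M+1).factorial : ℝ) * (-1 / a) ^ (M+1) with hd
    have g : ∀ p, poch p (M+1) * poch (-(x : ℝ)) (M+1) / ((M+1).factorial : ℝ) * (-1 / a) ^ (M+1)
       = poch p (M+1) * d := fun p => by rw [hd]; ring
    rw [g, g, g, h2]
    push_cast at h1 ⊢
    rw [h3] at h1 ⊢
    linear_combination ih - d * h1 - poch q M * h5

theorem charlier_eq_aux (n x : ℕ) (a : ℝ) :
    charlier n x a = Real.sqrt (a ^ n / n.factorial) * chT (-(n:ℝ)) x a (x+1) := by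
  unfold charlier chT
  congr 1
  apply Finset.sum_subset
  · intro l; simp only [Finset.mem_range]; omega
  · intro l h1 h2
    simp only [Finset.mem_range] at h1 h2
    rw [poch_zero_aux n l (by omega)]; simp

theorem w_succ_aux (a : ℝ) (ha : 0 < a) (n : ℕ) :
    Real.sqrt a * Real.sqrt ((n:ℝ)+1) * Real.sqrt (a ^ (n+1) / (n+1).factorial)
      = a * Real.sqrt (a ^ n / n.factorial) := by
  have h1 : a * Real.sqrt (a ^ n / n.factorial) = Real.sqrt (a^2 * (a ^ n / n.factorial)) := by
    rw [Real.sqrt_mul (by positivity), Real.sqrt_sq ha.le]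
  rw [h1, ← Real.sqrt_mul ha.le, ← Real.sqrt_mul (by positivity)]
  congr 1
  rw [Nat.factorial_succ]; push_cast
  have hf : (n.factorial : ℝ) ≠ 0 := by positivity
  field_simp
  ring

theorem w_pred_aux (a : ℝ) (ha : 0 < a) (n : ℕ) :
    Real.sqrt a * Real.sqrt ((n:ℝ)+1) * Real.sqrt (a ^ n / n.factorial)
      = (n+1) * Real.sqrt (a ^ (n+1) / (n+1).factorial) := by
  have h1 : ((n:ℝ)+1) * Real.sqrt (a ^ (n+1) / (n+1).factorial)
      = Real.sqrt (((n:ℝ)+1)^2 * (a ^ (n+1) / (n+1).factorial)) := by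
    rw [Real.sqrt_mul (by positivity), Real.sqrt_sq (by positivity)]
  rw [h1, ← Real.sqrt_mul ha.le, ← Real.sqrt_mul (by positivity)]
  congr 1
  rw [Nat.factorial_succ]; push_cast
  have hf : (n.factorial : ℝ) ≠ 0 := by positivity
  field_simp
  ring

/-- Charlier polynomials as formal eigenvectors of the oscillator
algebra Lax operator (convention f_{−1} = 0; the coefficient of f_{n−1}
vanishes at n = 0). -/
theorem stmt_9 (c r h k s : ℝ) (hc : c ≠ 0) (hr : r ≠ 0) (hh : 0 < h) (hk : 0 ≤ k)
    (a σ : ℝ) (ha : a = h * r ^ 2 / (4 * c ^ 2)) (hσ : σ = Real.sign (r / c)) :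
    (σ = 1 ∨ σ = -1) ∧
    ∀ x n : ℕ,
      r * Real.sqrt (h * (n : ℝ)) * ((-σ) ^ (n - 1) * charlier (n - 1) x a)
        + (2 * c * ((n : ℝ) + k) - h * s) * ((-σ) ^ n * charlier n x a)
        + r * Real.sqrt (h * ((n : ℝ) + 1)) * ((-σ) ^ (n + 1) * charlier (n + 1) x a)
      = (2 * c * ((x : ℝ) + k) - h * (r ^ 2 / (2 * c) + s)) * ((-σ) ^ n * charlier n x a) := by
  have hrc : r / c ≠ 0 := div_ne_zero hr hc
  have hs : σ = 1 ∨ σ = -1 := by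
    rw [hσ]
    rcases Real.sign_apply_eq_of_ne_zero _ hrc with h | h
    · exact Or.inr h
    · exact Or.inl h
  refine ⟨hs, fun x n => ?_⟩
  have hs2 : σ * σ = 1 := by rcases hs with h | h <;> rw [h] <;> norm_num
  have ha0 : 0 < a := by rw [ha]; positivity
  have hsa : r * Real.sqrt h = 2 * c * σ * Real.sqrt a := by
    have h1 : a = h * (r / c / 2) ^ 2 := by rw [ha]; field_simp; norm_num
    have h2 : σ * |r / c| = r / c := by 
      rw [hσ]
      rcases lt_or_gt_of_ne hrc with h | h
      · rw [Real.sign_of_neg h, abs_of_neg h]; ring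
      · rw [Real.sign_of_pos h, abs_of_pos h]; ring
    rw [h1, Real.sqrt_mul hh.le, Real.sqrt_sq_eq_abs, abs_div, abs_two]
    have h3 : r = c * (r / c) := by field_simp
    have h4 : r = c * (σ * |r / c|) := by rw [h2]; exact h3
    linear_combination Real.sqrt h * h4
  have hca : h * (r ^ 2 / (2 * c)) = 2 * c * a := by rw [ha]; field_simp; norm_num
  have hR := chT_rec (-(n:ℝ)) x a ha0.ne' x
  rw [sub_self, zero_mul] at hR
  have h3 : r * Real.sqrt (h * ((n : ℝ) + 1)) * ((-σ) ^ (n + 1) * charlier (n + 1) x a)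
      = (-σ)^n * (-2 * c * a * Real.sqrt (a ^ n / n.factorial) * chT (-(n:ℝ) - 1) x a (x+1)) := by
    have hw := w_succ_aux a ha0 n
    rw [charlier_eq_aux, Real.sqrt_mul hh.le, ← mul_assoc r, hsa, pow_succ,
      show (-((n+1 : ℕ):ℝ)) = -(n:ℝ) - 1 by push_cast; ring]
    linear_combination (-(-σ)^n * 2 * c * chT (-(n:ℝ) - 1) x a (x+1)) * (σ * σ * hw + a * Real.sqrt (a ^ n / n.factorial) * hs2)
  have h1 : r * Real.sqrt (h * (n : ℝ)) * ((-σ) ^ (n - 1) * charlier (n - 1) x a)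
      = (-σ)^n * (-2 * c * n * Real.sqrt (a ^ n / n.factorial) * chT (-(n:ℝ) + 1) x a (x+1)) := by
    cases n with
    | zero => simp
    | succ m =>
      have hw := w_pred_aux a ha0 m
      rw [Nat.add_sub_cancel, charlier_eq_aux, Real.sqrt_mul hh.le, ← mul_assoc r, hsa, pow_succ,
        show (-((m+1 : ℕ):ℝ)) + 1 = -(m:ℝ) by push_cast; ring]
      push_cast
      linear_combination ((-σ)^m * 2 * c * σ * chT (-(m:ℝ)) x a (x+1)) * hw
  rw [h1, h3, charlier_eq_aux]
  linear_combination (-(-σ)^n * 2 * c * Real.sqrt (a ^ n / n.factorial)) * hR + ((-σ)^n * Real.sqrt (a ^ n / n.factorial) * chT (-(n:ℝ)) x a (x+1)) * hca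
end

section
/- For every z ∈ ℝ and all n, n' ∈ ℤ, the Hansen–Lommel orthogonality relations hold: Σ_{m∈ℤ} J_{m−n}(z) J_{m−n'}(z) = δ_{n,n'} (the family (J_{m−n}(z)J_{m−n'}(z))_{m∈ℤ} being summable). Consequently, for c ≠ 0, k > 0, r ∈ ℝ, the operator U on ℓ²(ℤ) defined by (U e_n)(m) = J_{m−n}(kr/c) is unitary. -/
/-- Bessel function of natural order: J_n(z) = Σ_l (−1)^l (z/2)^{n+2l} / (l! (n+l)!). -/
noncomputable def besselJNat (n : ℕ) (z : ℝ) : ℝ :=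
  ∑' l : ℕ, (-1) ^ l * (z / 2) ^ (n + 2 * l) / ((l.factorial : ℝ) * ((n + l).factorial : ℝ))

/-- Bessel function of integer order, with J_{−n}(z) = (−1)^n J_n(z). -/
noncomputable def besselJ (n : ℤ) (z : ℝ) : ℝ :=
  if 0 ≤ n then besselJNat n.toNat z else (-1) ^ ((-n).toNat) * besselJNat ((-n).toNat) z

theorem hl_gen {T : Type} (h : T → ℝ) (hs : Summable h) (σ : T → ℤ) (φ : ℤ → ℝ) (C : ℝ)
    (hφ : ∀ k, |φ k| ≤ C) :
    HasSum (fun m => (∑' t, if σ t = m then h t else 0) * φ m) (∑' t, h t * φ (σ t)) := by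
  classical
  have h1 : Summable (fun t => h t * φ (σ t)) := by
    refine Summable.of_norm_bounded (hs.abs.mul_right C) (fun t => ?_)
    rw [Real.norm_eq_abs, abs_mul]
    exact mul_le_mul_of_nonneg_left (hφ _) (abs_nonneg _)
  let i : T → ℤ × T := fun t => (σ t, t)
  have hi : Function.Injective i := fun a b hab => (Prod.ext_iff.1 hab).2
  let G : ℤ × T → ℝ := fun p => (if σ p.2 = p.1 then h p.2 else 0) * φ p.1
  have hG : HasSum G (∑' t, h t * φ (σ t)) := by
    rw [← hi.hasSum_iff]
    · convert h1.hasSum using 2 with t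
      simp [G, i]
    · rintro ⟨m, t⟩ hm
      have : σ t ≠ m := fun e => hm ⟨t, by simp [i, e]⟩
      simp [G, this]
  refine hG.prod_fiberwise (fun m => ?_)
  have h2 : Summable (fun t => if σ t = m then h t else 0) := by
    refine Summable.of_norm_bounded hs.abs (fun t => ?_)
    split_ifs <;> simp
  exact h2.hasSum.mul_right _

theorem hl_bdd {T : Type} (h : T → ℝ) (hs : Summable h) (σ : T → ℤ) (k : ℤ) :
    |∑' t, if σ t = k then h t else 0| ≤ ∑' t, |h t| := by
  rw [← Real.norm_eq_abs]
  refine tsum_of_norm_bounded hs.abs.hasSum (fun t => ?_)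
  split_ifs <;> simp

noncomputable def hlh (x : ℝ) (t : ℕ × ℕ) : ℝ :=
  (x ^ t.1 / t.1.factorial) * ((-x) ^ t.2 / t.2.factorial)

theorem hlh_summable (x : ℝ) : Summable (hlh x) := by
  have h1 := (Real.summable_pow_div_factorial x).norm
  have h2 := (Real.summable_pow_div_factorial (-x)).norm
  exact summable_mul_of_summable_norm h1 h2

theorem hl_bessel (k : ℤ) (z : ℝ) :
    besselJ k z = ∑' t : ℕ × ℕ, if ((t.1 : ℤ) - t.2) = k then hlh (z / 2) t else 0 := by
  unfold besselJ besselJNat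
  split_ifs with hk
  · obtain ⟨n, rfl⟩ := Int.eq_ofNat_of_zero_le hk
    let i : ℕ → ℕ × ℕ := fun l => (n + l, l)
    have hi : Function.Injective i := fun a b hab => (Prod.ext_iff.1 hab).2
    rw [← hi.tsum_eq]
    · refine tsum_congr (fun l => ?_)
      have : ((n + l : ℕ) : ℤ) - l = n := by push_cast; ring
      simp only [i, this, if_true, hlh, Int.toNat_natCast]
      rw [neg_pow (z / 2) l]
      field_simp
      ring
    · rintro ⟨p, q⟩ hpq
      rw [Function.mem_support] at hpq
      have : (p : ℤ) - q = n := by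
        by_contra hne
        simp [hne] at hpq
      exact ⟨q, by simp only [i, Prod.mk.injEq, and_true]; omega⟩
  · obtain ⟨n, hn⟩ := Int.eq_ofNat_of_zero_le (show 0 ≤ -k by omega)
    obtain rfl : k = -(n : ℤ) := by omega
    let i : ℕ → ℕ × ℕ := fun l => (l, n + l)
    have hi : Function.Injective i := fun a b hab => (Prod.ext_iff.1 hab).1
    rw [← hi.tsum_eq, ← tsum_mul_left]
    · refine tsum_congr (fun l => ?_)
      have : (l : ℤ) - ((n + l : ℕ) : ℤ) = -n := by push_cast; ring
      simp only [i, this, if_true, hlh, neg_neg, Int.toNat_natCast]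
      rw [neg_pow (z / 2) (n + l)]
      field_simp
      ring
    · rintro ⟨p, q⟩ hpq
      rw [Function.mem_support] at hpq
      have : (p : ℤ) - q = -n := by
        by_contra hne
        simp [hne] at hpq
      exact ⟨p, by simp only [i, Prod.mk.injEq, true_and]; omega⟩

theorem hl_delta (k : ℤ) (x : ℝ) :
    (∑' t : ℕ × ℕ, if ((t.1 : ℤ) + t.2) = k then hlh x t else 0) = if k = 0 then 1 else 0 := by
  by_cases hk : 0 ≤ k
  · obtain ⟨n, rfl⟩ := Int.eq_ofNat_of_zero_le hk
    rw [tsum_eq_sum (s := Finset.HasAntidiagonal.antidiagonal n)]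
    · have h1 : ∀ t ∈ Finset.HasAntidiagonal.antidiagonal n,
          (if ((t.1 : ℤ) + t.2) = n then hlh x t else 0)
            = (n.choose t.1 • (x ^ t.1 * (-x) ^ t.2)) / n.factorial := by
        rintro ⟨p, q⟩ ht
        rw [Finset.HasAntidiagonal.mem_antidiagonal] at ht
        simp only at ht
        subst ht
        have := Nat.add_choose_mul_factorial_mul_factorial p q
        rw [← Nat.choose_symm_add] at this
        have h3 : ((p + q).choose p : ℝ) * p.factorial * q.factorial = (p + q).factorial := by
          exact_mod_cast this
        simp only [hlh, Nat.cast_add, if_true, nsmul_eq_mul]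
        rw [← h3]
        have : ((p + q).choose p : ℝ) ≠ 0 := by
          exact_mod_cast (Nat.choose_pos (Nat.le_add_right p q)).ne'
        field_simp
      rw [Finset.sum_congr rfl h1, ← Finset.sum_div, ← (Commute.all x (-x)).add_pow']
      by_cases hn : n = 0
      · simp [hn]
      · simp [hn]
    · rintro ⟨p, q⟩ ht
      rw [Finset.HasAntidiagonal.mem_antidiagonal] at ht
      rw [if_neg]
      simp only at ht ⊢
      omega
  · rw [if_neg (by omega)]
    refine (tsum_congr (fun t => ?_)).trans tsum_zero
    rw [if_neg]
    omega

theorem hl_pair (h : ℕ × ℕ → ℝ) (hs : Summable h) (R : ℕ × ℕ → ℕ × ℕ → Prop)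
    [∀ a b, Decidable (R a b)] :
    Summable (fun p : (ℕ × ℕ) × (ℕ × ℕ) => if R p.1 p.2 then h p.1 * h p.2 else 0) := by
  have := summable_mul_of_summable_norm hs.norm hs.norm
  refine Summable.of_norm_bounded this.norm (fun t => ?_)
  split_ifs <;> simp <;> positivity

def hlswap : (ℕ × ℕ) × (ℕ × ℕ) ≃ (ℕ × ℕ) × (ℕ × ℕ) where
  toFun p := ((p.1.1, p.2.2), (p.2.1, p.1.2))
  invFun p := ((p.1.1, p.2.2), (p.2.1, p.1.2))
  left_inv _ := rfl
  right_inv _ := rfl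

theorem hl_main (z : ℝ) (d : ℤ) :
    HasSum (fun m => besselJ m z * besselJ (m + d) z) (if d = 0 then 1 else 0) := by
  have hs := hlh_summable (z / 2)
  set h := hlh (z / 2) with hh
  have key := hl_gen h hs (fun t => (t.1 : ℤ) - t.2) (fun m => besselJ (m + d) z) (∑' t, |h t|)
    (fun k => by
      rw [hl_bessel]
      exact hl_bdd h hs (fun t => (t.1 : ℤ) - t.2) _)
  simp only [hh, ← hl_bessel] at key
  convert key using 1
  symm
  have e1 := (hl_pair h hs (fun t t' => (t'.1 : ℤ) - t'.2 = t.1 - t.2 + d))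
  have e2 := (hl_pair h hs (fun t t' => (t'.1 : ℤ) + t'.2 = t.1 + t.2 + d))
  have c1 : (∑' t : ℕ × ℕ, hlh (z / 2) t * besselJ ((t.1 : ℤ) - t.2 + d) z) =
      ∑' p : (ℕ × ℕ) × (ℕ × ℕ),
        if (p.2.1 : ℤ) - p.2.2 = p.1.1 - p.1.2 + d then h p.1 * h p.2 else 0 := by
    rw [e1.tsum_prod]
    refine tsum_congr (fun t => ?_)
    rw [hl_bessel, ← tsum_mul_left]
    refine tsum_congr (fun t' => ?_)
    simp [hh]
  have c2 : (∑' p : (ℕ × ℕ) × (ℕ × ℕ),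
        if (p.2.1 : ℤ) - p.2.2 = p.1.1 - p.1.2 + d then h p.1 * h p.2 else 0) =
      ∑' p : (ℕ × ℕ) × (ℕ × ℕ),
        if (p.2.1 : ℤ) + p.2.2 = p.1.1 + p.1.2 + d then h p.1 * h p.2 else 0 := by
    rw [← hlswap.tsum_eq]
    refine tsum_congr (fun p => ?_)
    obtain ⟨⟨a, b⟩, ⟨a', b'⟩⟩ := p
    have : ((a' : ℤ) - b = a - b' + d) ↔ ((a' : ℤ) + b' = a + b + d) := by
      constructor <;> intro <;> omega
    simp only [hlswap, Equiv.coe_fn_mk, this, hh, hlh]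
    split_ifs
    · ring
    · rfl
  have c3 : (∑' p : (ℕ × ℕ) × (ℕ × ℕ),
        if (p.2.1 : ℤ) + p.2.2 = p.1.1 + p.1.2 + d then h p.1 * h p.2 else 0) =
      ∑' t : ℕ × ℕ, if ((t.1 : ℤ) + t.2) = -d then h t else 0 := by
    rw [e2.tsum_prod]
    refine tsum_congr (fun t => ?_)
    have := hl_delta ((t.1 : ℤ) + t.2 + d) (z / 2)
    have e : ((t.1 : ℤ) + t.2 + d = 0) ↔ ((t.1 : ℤ) + t.2 = -d) := by
      constructor <;> intro <;> omega
    have e' : (if ((t.1 : ℤ) + t.2) = -d then h t else 0)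
        = h t * (if (t.1 : ℤ) + t.2 + d = 0 then 1 else 0) := by
      simp [e]
    rw [e', ← this, ← tsum_mul_left]
    refine tsum_congr (fun t' => ?_)
    simp [hh]
  rw [c1, c2, c3, hh, hl_delta]
  simp

theorem hl_rel (z : ℝ) (n n' : ℤ) :
    HasSum (fun m : ℤ => besselJ (m - n) z * besselJ (m - n') z) (if n = n' then 1 else 0) := by
  have := hl_main z (n - n')
  rw [← (Equiv.subRight n).hasSum_iff] at this
  convert this using 1
  · funext m
    simp
  · simp [sub_eq_zero]

theorem hl_summable (z : ℝ) : Summable (fun m => besselJ m z) := by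
  have key := hl_gen _ (hlh_summable (z / 2)) (fun t => (t.1 : ℤ) - t.2) (fun _ => 1) 1
    (fun k => by simp)
  simp only [← hl_bessel, mul_one] at key
  exact key.summable

noncomputable def hlv (z : ℝ) (n : ℤ) : lp (fun _ : ℤ => ℝ) 2 :=
  ⟨fun m => besselJ (m - n) z, by
    refine memℓp_gen ?_
    have := (hl_rel z n n).summable
    convert this using 2 with m
    simp [sq]⟩

theorem hlv_apply (z : ℝ) (n m : ℤ) : (hlv z n : ∀ _ : ℤ, ℝ) m = besselJ (m - n) z := rfl

theorem hlv_orthonormal (z : ℝ) : Orthonormal ℝ (hlv z) := by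
  rw [orthonormal_iff_ite]
  intro i j
  rw [lp.inner_eq_tsum]
  have := (hl_rel z j i).tsum_eq
  simp only [hlv_apply]
  simpa [eq_comm] using this

theorem hlv_single (z : ℝ) (m : ℤ) :
    HasSum (fun n => besselJ (m - n) z • hlv z n) (lp.single 2 m (1 : ℝ)) := by
  have hsum : Summable (fun n => besselJ (m - n) z • hlv z n) := by
    refine Summable.of_norm ?_
    simp only [norm_smul, (hlv_orthonormal z).1, mul_one]
    exact ((Equiv.subLeft m).summable_iff.2 (hl_summable z)).norm
  have hv : ∑' n, besselJ (m - n) z • hlv z n = lp.single 2 m (1 : ℝ) := by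
    ext m'
    have h1 := hsum.hasSum.mapL (lp.evalCLM ℝ (fun _ : ℤ => ℝ) 2 m')
    have h2 := hl_rel z (-m) (-m')
    rw [← (Equiv.neg ℤ).hasSum_iff] at h2
    have h1' : HasSum (fun n => besselJ (m - n) z * besselJ (m' - n) z)
        ((∑' n, besselJ (m - n) z • hlv z n : lp (fun _ : ℤ => ℝ) 2) m') := h1
    have h3 := h1'.unique (a₂ := if -m = -m' then 1 else 0) (by
      convert h2 using 1
      funext n
      change besselJ (m - n) z * besselJ (m' - n) z
        = besselJ (-n - -m) z * besselJ (-n - -m') z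
      ring_nf)
    refine h3.trans ?_
    rw [lp.single_apply]
    by_cases e : m = m'
    · subst e; simp
    · simp [e, Ne.symm e]
  rw [← hv]
  exact hsum.hasSum

theorem hlv_dense (z : ℝ) :
    ⊤ ≤ (Submodule.span ℝ (Set.range (hlv z))).topologicalClosure := by
  set K := (Submodule.span ℝ (Set.range (hlv z))).topologicalClosure with hK
  have hc : IsClosed (K : Set (lp (fun _ : ℤ => ℝ) 2)) := Submodule.isClosed_topologicalClosure _
  have hm : ∀ m, lp.single 2 m (1 : ℝ) ∈ K := fun m => by
    refine hc.mem_of_tendsto (hlv_single z m) (Filter.Eventually.of_forall fun s => ?_)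
    exact K.sum_mem fun n _ => K.smul_mem _
      (Submodule.le_topologicalClosure _ (Submodule.subset_span ⟨n, rfl⟩))
  intro f _
  refine hc.mem_of_tendsto (lp.hasSum_single (by norm_num) f)
    (Filter.Eventually.of_forall fun s => ?_)
  refine K.sum_mem fun n _ => ?_
  have : lp.single (E := fun _ : ℤ => ℝ) 2 n (f n) = (f n : ℝ) • lp.single 2 n (1 : ℝ) := by
    rw [← lp.single_smul]; simp
  rw [this]
  exact K.smul_mem _ (hm n)

/-- Hansen–Lommel orthogonality relations for Bessel functions,
and unitarity of the operator U on ℓ²(ℤ) with (U e_n)(m) = J_{m−n}(kr/c). -/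
theorem stmt_12 :
    (∀ (z : ℝ) (n n' : ℤ),
      Summable (fun m : ℤ => besselJ (m - n) z * besselJ (m - n') z) ∧
      (∑' m : ℤ, besselJ (m - n) z * besselJ (m - n') z) = if n = n' then 1 else 0) ∧
    (∀ c k r : ℝ, c ≠ 0 → 0 < k →
      ∃ U : lp (fun _ : ℤ => ℝ) 2 ≃ₗᵢ[ℝ] lp (fun _ : ℤ => ℝ) 2,
        ∀ n m : ℤ, (U (lp.single 2 n (1 : ℝ)) : ∀ _ : ℤ, ℝ) m = besselJ (m - n) (k * r / c)) := by
  refine ⟨fun z n n' => ⟨(hl_rel z n n').summable, (hl_rel z n n').tsum_eq⟩, ?_⟩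
  intro c k r _ _
  let b := HilbertBasis.mk (hlv_orthonormal (k * r / c)) (hlv_dense (k * r / c))
  refine ⟨b.repr.symm, fun n m => ?_⟩
  have h : b.repr.symm (lp.single 2 n (1 : ℝ)) = hlv (k * r / c) n := by
    rw [HilbertBasis.repr_symm_single, HilbertBasis.coe_mk]
  rw [h, hlv_apply]
end

section
/- Let r, s : [0,∞) → ℝ be continuously differentiable and u : [0,∞) → ℝ continuous, with ṡ(t) = 2u(t)r(t), ṙ(t) = −2u(t)s(t), and r(t) > 0 for all t ≥ 0. Set C = √(s(0)² + r(0)²). Then s(t)² + r(t)² = C² and C − s(t) > 0 for all t ≥ 0, and the modification function m(t) = (C + s(t))/(C − s(t)) satisfies ṁ(t)/m(t) = 4C·u(t)/r(t); equivalently m(t) = m(0) · exp(4C ∫_0^t u(τ)/r(τ) dτ) for all t ≥ 0. -/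
/-- modification function for the su(2)/Krawtchouk case:
m(t) = (C + s(t))/(C − s(t)) satisfies ṁ/m = 4C u/r, i.e.
m(t) = m(0) exp(4C ∫_0^t u/r). -/
theorem stmt_13 (r s u : ℝ → ℝ)
    (hs : ∀ t ∈ Set.Ici (0 : ℝ), HasDerivAt s (2 * u t * r t) t)
    (hr : ∀ t ∈ Set.Ici (0 : ℝ), HasDerivAt r (-2 * u t * s t) t)
    (hu : ContinuousOn u (Set.Ici (0 : ℝ)))
    (hrpos : ∀ t ∈ Set.Ici (0 : ℝ), 0 < r t)
    (C : ℝ) (hC : C = Real.sqrt (s 0 ^ 2 + r 0 ^ 2)) :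
    (∀ t ∈ Set.Ici (0 : ℝ), s t ^ 2 + r t ^ 2 = C ^ 2 ∧ 0 < C - s t) ∧
    (∀ t ∈ Set.Ici (0 : ℝ),
      HasDerivAt (fun τ => (C + s τ) / (C - s τ))
        (4 * C * (u t / r t) * ((C + s t) / (C - s t))) t) ∧
    (∀ t ∈ Set.Ici (0 : ℝ),
      (C + s t) / (C - s t)
        = (C + s 0) / (C - s 0) * Real.exp (4 * C * ∫ τ in (0 : ℝ)..t, u τ / r τ)) := by
  have hcons : ∀ t ∈ Set.Ici (0 : ℝ), s t ^ 2 + r t ^ 2 = C ^ 2 := by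
    intro t ht
    have hd : ∀ x ∈ Set.Ici (0 : ℝ), HasDerivAt (fun y => s y ^ 2 + r y ^ 2) 0 x := by
      intro x hx
      have h := ((hs x hx).pow 2).add ((hr x hx).pow 2)
      refine h.congr_deriv ?_
      push_cast
      ring
    have h := constant_of_has_deriv_right_zero (f := fun y => s y ^ 2 + r y ^ 2) (a := 0) (b := t)
      (fun x hx => (hd x hx.1).continuousAt.continuousWithinAt)
      (fun x hx => (hd x hx.1).hasDerivWithinAt) t ⟨ht, le_rfl⟩
    rw [hC, Real.sq_sqrt (by positivity)]
    exact h
  have hC0 : 0 ≤ C := hC ▸ Real.sqrt_nonneg _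
  have hm : ∀ t ∈ Set.Ici (0 : ℝ), 0 < C - s t := by
    intro t ht
    have h1 := hcons t ht
    have h2 := hrpos t ht
    have := abs_lt_of_sq_lt_sq (a := s t) (b := C) (by nlinarith) hC0
    have := (abs_lt.1 this).2
    linarith
  have hp : ∀ t ∈ Set.Ici (0 : ℝ), 0 < C + s t := by
    intro t ht
    have h1 := hcons t ht
    have h2 := hrpos t ht
    have := abs_lt_of_sq_lt_sq (a := s t) (b := C) (by nlinarith) hC0
    have := (abs_lt.1 this).1
    linarith
  have hder : ∀ t ∈ Set.Ici (0 : ℝ),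
      HasDerivAt (fun τ => (C + s τ) / (C - s τ))
        (4 * C * (u t / r t) * ((C + s t) / (C - s t))) t := by
    intro t ht
    have h1 := hcons t ht
    have h2 := (hrpos t ht).ne'
    have h3 := (hm t ht).ne'
    have h := ((hs t ht).const_add C).div ((hs t ht).const_sub C) h3
    refine h.congr_deriv ?_
    have h4 : r t ^ 2 = (C + s t) * (C - s t) := by linarith
    field_simp
    linear_combination 4 * C * u t * h4
  refine ⟨fun t ht => ⟨hcons t ht, hm t ht⟩, hder, ?_⟩
  intro t ht
  have ht0 : (0 : ℝ) ≤ t := ht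
  have h0 : (0 : ℝ) ∈ Set.Ici (0 : ℝ) := Set.mem_Ici.2 le_rfl
  have hpos : ∀ x ∈ Set.Ici (0 : ℝ), 0 < (C + s x) / (C - s x) :=
    fun x hx => div_pos (hp x hx) (hm x hx)
  have hsub : Set.uIcc 0 t ⊆ Set.Ici (0 : ℝ) := by
    rw [Set.uIcc_of_le ht0]
    exact fun x hx => hx.1
  have hint := intervalIntegral.integral_eq_sub_of_hasDerivAt
    (f := fun τ => Real.log ((C + s τ) / (C - s τ))) (f' := fun τ => 4 * C * (u τ / r τ))
    (a := 0) (b := t)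
    (fun x hx => by
      have hq := hpos x (hsub hx)
      refine ((hder x (hsub hx)).log hq.ne').congr_deriv ?_
      exact mul_div_cancel_right₀ _ hq.ne')
    (by
      apply ContinuousOn.intervalIntegrable
      refine continuousOn_const.mul ((hu.mono hsub).div ?_ ?_)
      · exact fun x hx => (hr x (hsub hx)).continuousAt.continuousWithinAt
      · exact fun x hx => (hrpos x (hsub hx)).ne')
  rw [intervalIntegral.integral_const_mul] at hint
  rw [hint, Real.exp_sub, Real.exp_log (hpos t ht), Real.exp_log (hpos 0 h0)]
  exact (mul_div_cancel₀ _ (hpos 0 h0).ne').symm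
end

section
/- Let r, s : [0,∞) → ℝ be continuously differentiable and u : [0,∞) → ℝ continuous, with ṡ(t) = −2u(t)r(t), ṙ(t) = −2u(t)s(t), and s(t) > r(t) > 0 for all t ≥ 0. Set C = √(s(0)² − r(0)²) > 0. Then s(t)² − r(t)² = C² for all t ≥ 0, and the modification function m(t) = ((s(t) − C)/r(t))², which equals exp(−2·arccosh(s(t)/r(t))), satisfies ṁ(t)/m(t) = −4C·u(t)/r(t); equivalently m(t) = m(0) · exp(−4C ∫_0^t u(τ)/r(τ) dτ) for all t ≥ 0. -/
/-- The inverse hyperbolic cosine, arccosh(y) = log(y + √(y² − 1)) (for y ≥ 1). -/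
noncomputable def arccosh (y : ℝ) : ℝ := Real.log (y + Real.sqrt (y ^ 2 - 1))

/-- modification function for the su(1,1)/Meixner case
(hyperbolic case s² − r² > 0): m(t) = ((s(t) − C)/r(t))² = exp(−2 arccosh(s(t)/r(t)))
satisfies ṁ/m = −4C u/r, i.e. m(t) = m(0) exp(−4C ∫_0^t u/r). -/
theorem stmt_14 (r s u : ℝ → ℝ)
    (hs : ∀ t ∈ Set.Ici (0 : ℝ), HasDerivAt s (-2 * u t * r t) t)
    (hr : ∀ t ∈ Set.Ici (0 : ℝ), HasDerivAt r (-2 * u t * s t) t)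
    (hu : ContinuousOn u (Set.Ici (0 : ℝ)))
    (hsr : ∀ t ∈ Set.Ici (0 : ℝ), 0 < r t ∧ r t < s t)
    (C : ℝ) (hC : C = Real.sqrt (s 0 ^ 2 - r 0 ^ 2)) :
    0 < C ∧
    (∀ t ∈ Set.Ici (0 : ℝ), s t ^ 2 - r t ^ 2 = C ^ 2) ∧
    (∀ t ∈ Set.Ici (0 : ℝ),
      ((s t - C) / r t) ^ 2 = Real.exp (-2 * arccosh (s t / r t))) ∧
    (∀ t ∈ Set.Ici (0 : ℝ),
      HasDerivAt (fun τ => ((s τ - C) / r τ) ^ 2)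
        (-4 * C * (u t / r t) * (((s t - C) / r t) ^ 2)) t) ∧
    (∀ t ∈ Set.Ici (0 : ℝ),
      ((s t - C) / r t) ^ 2
        = ((s 0 - C) / r 0) ^ 2 * Real.exp (-4 * C * ∫ τ in (0 : ℝ)..t, u τ / r τ)) := by
  have h0 := hsr 0 (by simp)
  have hpos : 0 < s 0 ^ 2 - r 0 ^ 2 := by nlinarith [h0.1, h0.2]
  have hCpos : 0 < C := by rw [hC]; exact Real.sqrt_pos.mpr hpos
  have hC2 : C ^ 2 = s 0 ^ 2 - r 0 ^ 2 := by rw [hC]; exact Real.sq_sqrt hpos.le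
  have hinv : ∀ t ∈ Set.Ici (0 : ℝ), s t ^ 2 - r t ^ 2 = C ^ 2 := by
    intro t ht
    have hd : ∀ x ∈ Set.Ici (0 : ℝ), HasDerivAt (fun τ => s τ ^ 2 - r τ ^ 2) 0 x := by
      intro x hx
      have h := ((hs x hx).pow 2).sub ((hr x hx).pow 2)
      refine h.congr_deriv ?_
      push_cast
      ring
    have := constant_of_has_deriv_right_zero (f := fun τ => s τ ^ 2 - r τ ^ 2) (a := 0) (b := t)
      (fun x hx => (hd x hx.1).continuousAt.continuousWithinAt)
      (fun x hx => (hd x hx.1).hasDerivWithinAt) t ⟨ht, le_rfl⟩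
    rw [hC2]; exact this
  have hsC : ∀ t ∈ Set.Ici (0 : ℝ), 0 < s t - C := by
    intro t ht
    have h1 := hsr t ht
    have h2 := hinv t ht
    nlinarith [h1.1, h1.2]
  have hder : ∀ t ∈ Set.Ici (0 : ℝ),
      HasDerivAt (fun τ => ((s τ - C) / r τ) ^ 2)
        (-4 * C * (u t / r t) * (((s t - C) / r t) ^ 2)) t := by
    intro t ht
    have hrt := (hsr t ht).1.ne'
    have h := ((((hs t ht).sub_const C).div (hr t ht) hrt).pow 2)
    refine h.congr_deriv ?_
    have h2 : r t ^ 2 = s t ^ 2 - C ^ 2 := by linarith [hinv t ht]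
    have e : (-2 * u t * r t * r t - (s t - C) * (-2 * u t * s t)) / r t ^ 2
        = -2 * C * (u t / r t) * ((s t - C) / r t) := by
      field_simp
      linear_combination (-u t) * h2
    simp only [Pi.div_apply]
    rw [e]
    push_cast
    ring
  refine ⟨hCpos, hinv, ?_, hder, ?_⟩
  · intro t ht
    have hrt := (hsr t ht).1
    have hst : 0 < s t := hrt.trans (hsr t ht).2
    have h2 := hinv t ht
    have e : Real.sqrt ((s t / r t) ^ 2 - 1) = C / r t := by
      rw [show (s t / r t) ^ 2 - 1 = (C / r t) ^ 2 by
        field_simp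
        linarith]
      exact Real.sqrt_sq (by positivity)
    have hp : 0 < s t / r t + C / r t := by positivity
    have hx : (s t - C) / r t = (s t / r t + C / r t)⁻¹ := by
      apply eq_inv_of_mul_eq_one_left
      field_simp
      linarith
    unfold arccosh
    rw [e, hx, show -2 * Real.log (s t / r t + C / r t)
        = -Real.log (s t / r t + C / r t) + -Real.log (s t / r t + C / r t) by ring,
      Real.exp_add, Real.exp_neg, Real.exp_log hp]
    ring
  · intro t ht
    have hmpos : ∀ x ∈ Set.Ici (0 : ℝ), 0 < ((s x - C) / r x) ^ 2 := by
      intro x hx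
      have := hsC x hx
      have := (hsr x hx).1
      positivity
    have hsub : Set.uIcc 0 t ⊆ Set.Ici (0 : ℝ) := by
      rw [Set.uIcc_of_le ht]
      exact fun x hx => hx.1
    have hcont : ContinuousOn (fun τ => -4 * C * (u τ / r τ)) (Set.Ici (0 : ℝ)) :=
      continuousOn_const.mul (hu.div (fun x hx => (hr x hx).continuousAt.continuousWithinAt)
        (fun x hx => (hsr x hx).1.ne'))
    have hI := intervalIntegral.integral_eq_sub_of_hasDerivAt (a := 0) (b := t)
      (f := fun τ => Real.log (((s τ - C) / r τ) ^ 2)) (f' := fun τ => -4 * C * (u τ / r τ))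
      (fun x hx => by
        have h := (hder x (hsub hx)).log (hmpos x (hsub hx)).ne'
        rwa [mul_div_cancel_right₀ _ (hmpos x (hsub hx)).ne'] at h)
      (hcont.mono hsub).intervalIntegrable
    rw [intervalIntegral.integral_const_mul] at hI
    rw [hI, Real.exp_sub, Real.exp_log (hmpos t ht), Real.exp_log (hmpos 0 (by simp)),
      mul_div_cancel₀ _ (hmpos 0 (by simp)).ne']
end
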